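/- (Classification theorem, case Ōɠ= id) Every simple object D of Mod^ŌÜ_{/K} with Ōɠ= id is isomorphic to D(r, a) for some r ‚ąą R_b and a ‚ąą k*: writing őī/‚Ąď(r) = p^v t with gcd(t,p)=1, D(őī,n) admits a Jordan‚ÄďHŲlder filtration all of whose factors are of the form D(r, a). -/

import Mathlib

/-- The φ-semilinear operator of the φ-module `D(d, n, a)` over `K = k((u))`. -/
noncomputable def Dphi {k : Type*} [Field k]
    (φ : LaurentSeries k →+* LaurentSeries k) (d n : ℕ) (a : k)
    (x : Fin d → LaurentSeries k) : Fin d → LaurentSeries k :=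
  fun j =>
    if (j : ℕ) = 0 then
      HahnSeries.single (n : ℤ) a * φ (x ⟨d - 1, by have := j.isLt; omega⟩)
    else
      φ (x ⟨(j : ℕ) - 1, by have := j.isLt; omega⟩)


section Aux

open Filter Topology

variable {k : Type*} [Field k]

theorem aux_order_phi {b : ℕ} (hb : 1 < b) (φ : LaurentSeries k →+* LaurentSeries k)
    (hφ1 : ∀ (f : LaurentSeries k) (m : ℤ), (φ f).coeff ((b : ℤ) * m) = f.coeff m)
    (hφ2 : ∀ (f : LaurentSeries k) (m : ℤ), ¬ ((b : ℤ) ∣ m) → (φ f).coeff m = 0)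
    (f : LaurentSeries k) (hf : f ≠ 0) : (φ f).order = b * f.order := by
  have hb' : (0 : ℤ) < b := by exact_mod_cast (by omega : 0 < b)
  have hf' : φ f ≠ 0 := by simpa using hf
  have hne : f.coeff f.order ≠ 0 := by
    simpa using HahnSeries.coeff_order_eq_zero.not.2 hf
  have hne' : (φ f).coeff (φ f).order ≠ 0 := by
    simpa using HahnSeries.coeff_order_eq_zero.not.2 hf'
  apply le_antisymm
  · apply HahnSeries.order_le_of_coeff_ne_zero
    rw [hφ1]; exact hne
  · by_cases hd : (b : ℤ) ∣ (φ f).order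
    · obtain ⟨m, hm⟩ := hd
      rw [hm, hφ1] at hne'
      rw [hm]
      exact mul_le_mul_of_nonneg_left (HahnSeries.order_le_of_coeff_ne_zero hne') hb'.le
    · exact absurd (hφ2 f _ hd) hne'

theorem aux_phi_C {b : ℕ} (hb : 1 < b) (φ : LaurentSeries k →+* LaurentSeries k)
    (hφ1 : ∀ (f : LaurentSeries k) (m : ℤ), (φ f).coeff ((b : ℤ) * m) = f.coeff m)
    (hφ2 : ∀ (f : LaurentSeries k) (m : ℤ), ¬ ((b : ℤ) ∣ m) → (φ f).coeff m = 0)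
    (c : k) : φ (HahnSeries.C c) = HahnSeries.C c := by
  have hb' : (0 : ℤ) < b := by exact_mod_cast (by omega : 0 < b)
  ext j
  by_cases hd : (b : ℤ) ∣ j
  · obtain ⟨m, rfl⟩ := hd
    rw [hφ1]
    have hb0 : b ≠ 0 := by omega
    simp [HahnSeries.C_apply, HahnSeries.coeff_single, hb0]
  · rw [hφ2 _ _ hd]
    have : j ≠ 0 := by rintro rfl; simp at hd
    simp [HahnSeries.C_apply, this]

variable {V : Type*} [AddCommGroup V] [Module (LaurentSeries k) V]

/-- coordinates have vanishing coefficients below `m` -/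
def VLat {d : ℕ} (e : Module.Basis (Fin d) (LaurentSeries k) V) (m : ℤ) (x : V) : Prop :=
  ∀ i, ∀ j < m, (e.repr x i).coeff j = 0

/-- product estimate for coefficients -/
theorem aux_mul_coeff (f g : LaurentSeries k) (m m' : ℤ) (hf : ∀ j < m, f.coeff j = 0)
    (hg : ∀ j < m', g.coeff j = 0) : ∀ j < m + m', (f * g).coeff j = 0 := by
  intro j hj
  rw [HahnSeries.coeff_mul]
  apply Finset.sum_eq_zero
  rintro ⟨s, t⟩ hst
  simp only [Finset.mem_antidiagonal] at hst
  by_cases h1 : s < m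
  · simp [hf s h1]
  · have : t < m' := by omega
    simp [hg t this]

theorem aux_low (f : LaurentSeries k) : ∀ j < f.order, f.coeff j = 0 :=
  fun _ hj => HahnSeries.coeff_eq_zero_of_lt_order hj

variable {d : ℕ} (e e' : Module.Basis (Fin d) (LaurentSeries k) V)

theorem VLat.mono {e : Module.Basis (Fin d) (LaurentSeries k) V} {m m' : ℤ} {x : V}
    (h : VLat e m x) (hm : m' ≤ m) : VLat e m' x :=
  fun i j hj => h i j (lt_of_lt_of_le hj hm)

theorem VLat.add {e : Module.Basis (Fin d) (LaurentSeries k) V} {m : ℤ} {x y : V}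
    (h : VLat e m x) (h' : VLat e m y) : VLat e m (x + y) := by
  intro i j hj
  simp [h i j hj, h' i j hj]

theorem VLat.smul {e : Module.Basis (Fin d) (LaurentSeries k) V} {m : ℤ} {x : V}
    (h : VLat e m x) (f : LaurentSeries k) : VLat e (f.order + m) (f • x) := by
  intro i j hj
  simp only [map_smul, Finsupp.smul_apply, smul_eq_mul]
  exact aux_mul_coeff _ _ _ _ (aux_low f) (h i) j hj

theorem aux_base_change : ∃ c : ℤ, 0 ≤ c ∧ ∀ m x, VLat e m x → VLat e' (m - c) x := by
  refine ⟨∑ i, ∑ j, |(e'.repr (e j) i).order|, by positivity, ?_⟩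
  intro m x hx i j hj
  have : e'.repr x i = ∑ l, e'.repr (e l) i * e.repr x l := by
    conv_lhs => rw [← e.sum_repr x, map_sum, Finsupp.finsetSum_apply]
    exact Finset.sum_congr rfl fun l _ => by simp [mul_comm]
  rw [this, HahnSeries.coeff_sum]
  apply Finset.sum_eq_zero
  intro l _
  refine aux_mul_coeff _ _ _ _ (aux_low _) (hx l) j ?_
  have h1 : |(e'.repr (e l) i).order| ≤ ∑ j, |(e'.repr (e j) i).order| :=
    Finset.single_le_sum (f := fun j => |(e'.repr (e j) i).order|) (fun _ _ => abs_nonneg _) (Finset.mem_univ l)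
  have h2 : ∑ j, |(e'.repr (e j) i).order| ≤ ∑ i, ∑ j, |(e'.repr (e j) i).order| :=
    Finset.single_le_sum (f := fun i => ∑ j, |(e'.repr (e j) i).order|)
      (fun _ _ => Finset.sum_nonneg fun _ _ => abs_nonneg _) (Finset.mem_univ i)
  have h3 := neg_abs_le (e'.repr (e l) i).order
  omega

theorem aux_exists_w (x : V) (hx : x ≠ 0) : ∃ w : ℤ, ∀ m, m ≤ w ↔ VLat e m x := by
  obtain ⟨i, hi⟩ : ∃ i, e.repr x i ≠ 0 := by
    by_contra! hcon
    apply hx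
    apply e.repr.injective
    ext1 i
    simp [hcon i]
  have hbd : ∀ m, VLat e m x → m ≤ (e.repr x i).order := by
    intro m hm
    by_contra! hlt
    exact HahnSeries.coeff_order_eq_zero.not.2 hi (hm i _ hlt)
  have hne : ∃ m, VLat e m x := by
    refine ⟨- ∑ i, |(e.repr x i).order|, fun i j hj => aux_low _ j ?_⟩
    have h1 : |(e.repr x i).order| ≤ ∑ i, |(e.repr x i).order| :=
      Finset.single_le_sum (f := fun j => |(e.repr x j).order|) (fun _ _ => abs_nonneg _) (Finset.mem_univ i)
    have h3 := neg_abs_le (e.repr x i).order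
    omega
  obtain ⟨w, hw, hw'⟩ := Int.exists_greatest_of_bdd ⟨_, hbd⟩ hne
  exact ⟨w, fun m => ⟨fun h => hw.mono h, hw' m⟩⟩

open Classical in
/-- the valuation of a vector -/
noncomputable def wz (x : V) : ℤ := if hx : x ≠ 0 then (aux_exists_w e x hx).choose else 0

theorem wz_spec (x : V) (hx : x ≠ 0) (m : ℤ) : m ≤ wz e x ↔ VLat e m x := by
  unfold wz
  rw [dif_pos hx]
  exact (aux_exists_w e x hx).choose_spec m

theorem wz_smul_le (x : V) (hx : x ≠ 0) (f : LaurentSeries k) (hf : f ≠ 0) :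
    f.order + wz e x ≤ wz e (f • x) := by
  rw [wz_spec e _ (smul_ne_zero hf hx)]
  exact ((wz_spec e x hx _).1 le_rfl).smul f

theorem wz_smul (x : V) (hx : x ≠ 0) (f : LaurentSeries k) (hf : f ≠ 0) :
    wz e (f • x) = f.order + wz e x := by
  apply le_antisymm _ (wz_smul_le e x hx f hf)
  have h := wz_smul_le e (f • x) (smul_ne_zero hf hx) f⁻¹ (inv_ne_zero hf)
  rw [inv_smul_smul₀ hf] at h
  have h2 : (f⁻¹ * f).order = f⁻¹.order + f.order := HahnSeries.order_mul (inv_ne_zero hf) hf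
  rw [inv_mul_cancel₀ hf, HahnSeries.order_one] at h2
  omega

theorem wz_add (x y : V) (hx : x ≠ 0) (hy : y ≠ 0) (hxy : x + y ≠ 0) :
    min (wz e x) (wz e y) ≤ wz e (x + y) := by
  rw [wz_spec e _ hxy]
  exact ((wz_spec e x hx _).1 (min_le_left _ _)).add ((wz_spec e y hy _).1 (min_le_right _ _))

/-- limits of series in Laurent series -/
theorem aux_limit (g : ℕ → LaurentSeries k)
    (hg : ∀ N : ℤ, ∃ M0 : ℕ, ∀ m ≥ M0, ∀ j < N, (g m).coeff j = 0) :
    ∃ s : LaurentSeries k, ∀ N : ℤ, ∃ M0 : ℕ, ∀ M ≥ M0, ∀ j < N,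
      (s - ∑ m ∈ Finset.range M, g m).coeff j = 0 := by
  choose M0 hM0 using hg
  have hconst : ∀ j : ℤ, ∀ M' M : ℕ, M' ≤ M → (∀ m ≥ M', (g m).coeff j = 0) →
      (∑ m ∈ Finset.range M, g m).coeff j = (∑ m ∈ Finset.range M', g m).coeff j := by
    intro j M' M hM h
    induction M, hM using Nat.le_induction with
    | base => rfl
    | succ n hn ih => rw [Finset.sum_range_succ, HahnSeries.coeff_add, ih, h n hn, add_zero]
  have hconst2 : ∀ j : ℤ, ∀ M' M : ℕ, (∀ m ≥ M', (g m).coeff j = 0) → (∀ m ≥ M, (g m).coeff j = 0) →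
      (∑ m ∈ Finset.range M, g m).coeff j = (∑ m ∈ Finset.range M', g m).coeff j := by
    intro j M' M h h'
    rcases le_total M' M with hl | hl
    · exact hconst j M' M hl h
    · exact (hconst j M M' hl h').symm
  set B : ℤ := - ∑ m ∈ Finset.range (M0 0), |(g m).order| with hB
  have hB0 : B ≤ 0 := by rw [hB]; simpa using Finset.sum_nonneg fun _ _ => abs_nonneg _
  have hlow : ∀ m, ∀ j < B, (g m).coeff j = 0 := by
    intro m j hj
    by_cases hm : M0 0 ≤ m
    · exact hM0 0 m hm j (by omega)
    · apply aux_low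
      have h1 : |(g m).order| ≤ ∑ m ∈ Finset.range (M0 0), |(g m).order| :=
        Finset.single_le_sum (f := fun j => |(g j).order|) (fun _ _ => abs_nonneg _)
          (Finset.mem_range.2 (by omega))
      have h3 := neg_abs_le (g m).order
      omega
  refine ⟨HahnSeries.ofSuppBddBelow
    (fun j => (∑ m ∈ Finset.range (M0 (j + 1)), g m).coeff j) ?_, ?_⟩
  · refine ⟨B, ?_⟩
    intro j hj
    by_contra! hlt
    apply hj
    simp only [HahnSeries.coeff_sum]
    exact Finset.sum_eq_zero fun m _ => hlow m j hlt
  · intro N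
    refine ⟨M0 N, fun M hM j hj => ?_⟩
    rw [HahnSeries.coeff_sub, sub_eq_zero]
    exact hconst2 j _ _ (fun m hm => hM0 N m (le_trans hM hm) j hj)
      (fun m hm => hM0 _ m hm j (by omega))

theorem aux_limit_V (y : ℕ → V)
    (hg : ∀ N : ℤ, ∃ M0 : ℕ, ∀ m ≥ M0, VLat e N (y m)) :
    ∃ s : V, ∀ N : ℤ, ∃ M0 : ℕ, ∀ M ≥ M0, VLat e N (s - ∑ m ∈ Finset.range M, y m) := by
  have : ∀ i, ∃ s : LaurentSeries k, ∀ N : ℤ, ∃ M0 : ℕ, ∀ M ≥ M0, ∀ j < N,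
      (s - ∑ m ∈ Finset.range M, e.repr (y m) i).coeff j = 0 := by
    intro i
    apply aux_limit
    intro N
    obtain ⟨M0, h⟩ := hg N
    exact ⟨M0, fun m hm => h m hm i⟩
  choose s hs using this
  refine ⟨e.equivFun.symm s, fun N => ?_⟩
  choose M0 hM0 using fun i => hs i N
  refine ⟨∑ i, M0 i, fun M hM i j hj => ?_⟩
  have h1 : M0 i ≤ ∑ i, M0 i := Finset.single_le_sum (fun _ _ => Nat.zero_le _) (Finset.mem_univ i)
  have h2 : e.repr (e.equivFun.symm s) i = s i := by
    rw [← e.equivFun_apply, LinearEquiv.apply_symm_apply]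
  have := hM0 i M (h1.trans hM) j hj
  rw [map_sub, Finsupp.sub_apply, h2, map_sum, Finsupp.finsetSum_apply]
  exact this


theorem aux_phi_basis (φ : LaurentSeries k →+* LaurentSeries k) (φV : V → V)
    (hadd : ∀ x y, φV (x + y) = φV x + φV y)
    (hsemi : ∀ (c : LaurentSeries k) (x : V), φV (c • x) = φ c • φV x)
    (hetale : Submodule.span (LaurentSeries k) (Set.range φV) = ⊤) :
    ∃ e' : Module.Basis (Fin d) (LaurentSeries k) V, ∀ x i,
      e'.repr (φV x) i = φ (e.repr x i) := by
  have hsum : ∀ x, φV x = ∑ i, φ (e.repr x i) • φV (e i) := by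
    intro x
    let F : V →+ V := AddMonoidHom.mk' φV hadd
    have : φV x = F x := rfl
    rw [this]
    conv_lhs => rw [← e.sum_repr x, map_sum]
    apply Finset.sum_congr rfl
    intro i _
    exact hsemi _ _
  have htop : ⊤ ≤ Submodule.span (LaurentSeries k) (Set.range fun i => φV (e i)) := by
    rw [← hetale, Submodule.span_le]
    rintro _ ⟨x, rfl⟩
    rw [hsum]
    exact Submodule.sum_mem _ fun i _ => Submodule.smul_mem _ _ (Submodule.subset_span ⟨i, rfl⟩)
  have hfin : Module.finrank (LaurentSeries k) V = d := by
    simpa using Module.finrank_eq_card_basis e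
  have hli : LinearIndependent (LaurentSeries k) fun i => φV (e i) :=
    linearIndependent_of_top_le_span_of_card_eq_finrank htop (by simp [hfin])
  refine ⟨Module.Basis.mk hli htop, fun x i => ?_⟩
  set e' := Module.Basis.mk hli htop with he'
  have h1 : φV x = ∑ i, φ (e.repr x i) • e' i := by
    rw [hsum]; simp [he']
  rw [h1, e'.repr_sum_self]

theorem aux_w_phi {b : ℕ} (hb : 1 < b) (φ : LaurentSeries k →+* LaurentSeries k)
    (hφ1 : ∀ (f : LaurentSeries k) (m : ℤ), (φ f).coeff ((b : ℤ) * m) = f.coeff m)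
    (hφ2 : ∀ (f : LaurentSeries k) (m : ℤ), ¬ ((b : ℤ) ∣ m) → (φ f).coeff m = 0)
    (φV : V → V)
    (hadd : ∀ x y, φV (x + y) = φV x + φV y)
    (hsemi : ∀ (c : LaurentSeries k) (x : V), φV (c • x) = φ c • φV x)
    (hetale : Submodule.span (LaurentSeries k) (Set.range φV) = ⊤) :
    (∀ x, x ≠ 0 → φV x ≠ 0) ∧
    ∃ c : ℤ, ∀ x, x ≠ 0 → |wz e (φV x) - b * wz e x| ≤ c := by
  have hb' : (0 : ℤ) < b := by exact_mod_cast (by omega : 0 < b)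
  obtain ⟨e', he'⟩ := aux_phi_basis e φ φV hadd hsemi hetale
  have hne : ∀ x, x ≠ 0 → φV x ≠ 0 := by
    intro x hx h0
    apply hx
    apply e.repr.injective
    ext1 i
    have := he' x i
    rw [h0] at this
    simpa using this.symm
  refine ⟨hne, ?_⟩
  obtain ⟨c1, hc1, h1⟩ := aux_base_change e e'
  obtain ⟨c2, hc2, h2⟩ := aux_base_change e' e
  refine ⟨c1 + c2, fun x hx => ?_⟩
  have hup : VLat e' (b * wz e x) (φV x) := by
    intro i j hj
    rw [he']
    by_cases hd : (b : ℤ) ∣ j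
    · obtain ⟨m, rfl⟩ := hd
      rw [hφ1]
      exact (wz_spec e x hx _).1 le_rfl i m (lt_of_mul_lt_mul_left hj hb'.le)
    · exact hφ2 _ _ hd
  have hdown : ∀ m, VLat e' m (φV x) → m ≤ b * wz e x := by
    intro m hm
    by_contra! hlt
    have : VLat e (wz e x + 1) x := by
      intro i j hj
      rw [← hφ1, ← he']
      apply hm i
      have : (b : ℤ) * j ≤ b * wz e x := mul_le_mul_of_nonneg_left (by omega) hb'.le
      omega
    rw [← wz_spec e x hx] at this
    omega
  have h3 := (wz_spec e _ (hne x hx) _).2 (h2 _ _ hup)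
  have h4 := hdown _ (h1 _ _ ((wz_spec e _ (hne x hx) _).1 le_rfl))
  rw [abs_le]
  constructor <;> omega

/-- the canonical norm -/
structure IsCan (b : ℕ) (φV : V → V) (h : V → ℝ) : Prop where
  phi_ne : ∀ x, x ≠ 0 → φV x ≠ 0
  phi : ∀ x, x ≠ 0 → h (φV x) = b * h x
  smul : ∀ (f : LaurentSeries k) x, f ≠ 0 → x ≠ 0 → h (f • x) = f.order + h x
  add : ∀ x y, x ≠ 0 → y ≠ 0 → x + y ≠ 0 → min (h x) (h y) ≤ h (x + y)
  compl : ∀ y : ℕ → V, (∀ T : ℝ, ∃ M0 : ℕ, ∀ m ≥ M0, y m = 0 ∨ T ≤ h (y m)) →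
    ∃ s : V, ∀ T : ℝ, ∃ M0 : ℕ, ∀ M ≥ M0, s - ∑ m ∈ Finset.range M, y m = 0 ∨
      T ≤ h (s - ∑ m ∈ Finset.range M, y m)

theorem exists_isCan [FiniteDimensional (LaurentSeries k) V] {b : ℕ} (hb : 1 < b) (φ : LaurentSeries k →+* LaurentSeries k)
    (hφ1 : ∀ (f : LaurentSeries k) (m : ℤ), (φ f).coeff ((b : ℤ) * m) = f.coeff m)
    (hφ2 : ∀ (f : LaurentSeries k) (m : ℤ), ¬ ((b : ℤ) ∣ m) → (φ f).coeff m = 0)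
    (φV : V → V)
    (hadd : ∀ x y, φV (x + y) = φV x + φV y)
    (hsemi : ∀ (c : LaurentSeries k) (x : V), φV (c • x) = φ c • φV x)
    (hetale : Submodule.span (LaurentSeries k) (Set.range φV) = ⊤) :
    ∃ h : V → ℝ, IsCan (k := k) b φV h := by
  let e := Module.finBasis (LaurentSeries k) V
  have hb' : (0 : ℝ) < b := by exact_mod_cast (by omega : 0 < b)
  have hb1 : (1 : ℝ) < b := by exact_mod_cast hb
  have hb2 : (2 : ℝ) ≤ b := by exact_mod_cast hb
  obtain ⟨hne, c, hc⟩ := aux_w_phi e hb φ hφ1 hφ2 φV hadd hsemi hetale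
  have hneI : ∀ n x, x ≠ 0 → φV^[n] x ≠ 0 := by
    intro n
    induction n with
    | zero => intro x hx; simpa
    | succ n ih => intro x hx; rw [Function.iterate_succ_apply']; exact hne _ (ih x hx)
  let A : V → ℕ → ℝ := fun x n => (wz e (φV^[n] x) : ℝ) / (b : ℝ) ^ n
  have hstep : ∀ x, x ≠ 0 → ∀ n, dist (A x n) (A x (n + 1)) ≤ ((c : ℝ) / b) * (1 / (b : ℝ)) ^ n := by
    intro x hx n
    have h1 := hc _ (hneI n x hx)
    have h1' : |(wz e (φV (φV^[n] x)) : ℝ) - b * wz e (φV^[n] x)| ≤ c := by exact_mod_cast h1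
    rw [dist_comm, Real.dist_eq]
    have : A x (n + 1) - A x n =
        ((wz e (φV (φV^[n] x)) : ℝ) - b * wz e (φV^[n] x)) / (b : ℝ) ^ (n + 1) := by
      simp only [A, Function.iterate_succ_apply']
      field_simp
      ring
    rw [this, abs_div, abs_of_pos (pow_pos hb' (n + 1))]
    calc _ ≤ (c : ℝ) / (b : ℝ) ^ (n + 1) := by gcongr
      _ = _ := by rw [one_div, inv_pow, pow_succ]; field_simp
  have hlt1 : 1 / (b : ℝ) < 1 := by rw [div_lt_one hb']; exact hb1
  have hlim : ∀ x, ∃ l : ℝ, x ≠ 0 → Tendsto (A x) atTop (𝓝 l) := by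
    intro x
    by_cases hx : x = 0
    · exact ⟨0, fun h => absurd hx h⟩
    · obtain ⟨l, hl⟩ := cauchySeq_tendsto_of_complete
        (cauchySeq_of_le_geometric _ _ hlt1 (hstep x hx))
      exact ⟨l, fun _ => hl⟩
  choose h hh using hlim
  have hdist : ∀ x, x ≠ 0 → |(wz e x : ℝ) - h x| ≤ c := by
    intro x hx
    have h1 := dist_le_of_le_geometric_of_tendsto₀ _ _ hlt1 (hstep x hx) (hh x hx)
    have h2 : A x 0 = wz e x := by simp [A]
    rw [h2, Real.dist_eq] at h1
    refine h1.trans ?_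
    have hc0 : (0 : ℝ) ≤ c := by exact_mod_cast (abs_nonneg _).trans (hc x hx)
    have : (c : ℝ) / b / (1 - 1 / b) = c / (b - 1) := by
      have : (b : ℝ) - 1 ≠ 0 := by linarith
      field_simp
    rw [this]
    exact div_le_self hc0 (by linarith)
  have hIadd : ∀ n x y, φV^[n] (x + y) = φV^[n] x + φV^[n] y := by
    intro n
    induction n with
    | zero => intro x y; rfl
    | succ n ih => intro x y; simp only [Function.iterate_succ_apply', ih, hadd]
  have hIsmul : ∀ n (f : LaurentSeries k), f ≠ 0 → ∀ x, ∃ g : LaurentSeries k, g ≠ 0 ∧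
      g.order = (b : ℤ) ^ n * f.order ∧ φV^[n] (f • x) = g • φV^[n] x := by
    intro n f hf x
    induction n with
    | zero => exact ⟨f, hf, by simp, rfl⟩
    | succ n ih =>
      obtain ⟨g, hg, hgo, hgx⟩ := ih
      refine ⟨φ g, by simpa using hg, ?_, ?_⟩
      · rw [aux_order_phi hb φ hφ1 hφ2 g hg, hgo]; ring
      · simp only [Function.iterate_succ_apply', hgx, hsemi]
  refine ⟨h, hne, ?_, ?_, ?_, ?_⟩
  · intro x hx
    have h1 : Tendsto (fun n => (b : ℝ) * A x (n + 1)) atTop (𝓝 (b * h x)) :=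
      ((tendsto_add_atTop_iff_nat 1).2 (hh x hx)).const_mul _
    refine tendsto_nhds_unique (hh _ (hne x hx)) (h1.congr fun n => ?_)
    simp only [A, Function.iterate_succ_apply]
    field_simp
    ring
  · intro f x hf hx
    have h1 : Tendsto (fun n => (f.order : ℝ) + A x n) atTop (𝓝 (f.order + h x)) :=
      (hh x hx).const_add _
    refine tendsto_nhds_unique (hh _ (smul_ne_zero hf hx)) (h1.congr fun n => ?_)
    obtain ⟨g, hg, hgo, hgx⟩ := hIsmul n f hf x
    simp only [A, hgx, wz_smul e _ (hneI n x hx) g hg, hgo]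
    push_cast
    field_simp
  · intro x y hx hy hxy
    refine le_of_tendsto_of_tendsto' ((hh x hx).min (hh y hy)) (hh _ hxy) fun n => ?_
    have h1 := wz_add e _ _ (hneI n x hx) (hneI n y hy) (by rw [← hIadd]; exact hneI n _ hxy)
    rw [← hIadd] at h1
    simp only [A]
    rw [min_div_div_right (pow_pos hb' n).le]
    gcongr
    exact_mod_cast h1
  · intro y hy
    have hz : ∀ N, VLat e N (0 : V) := by intro N i j _; simp
    obtain ⟨s, hs⟩ := aux_limit_V e y (by
      intro N
      obtain ⟨M0, hM0⟩ := hy (N + c)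
      refine ⟨M0, fun m hm => ?_⟩
      by_cases h0 : y m = 0
      · rw [h0]; exact hz N
      · rw [← wz_spec e _ h0]
        have h1 := (hM0 m hm).resolve_left h0
        have h2 := (abs_le.1 (hdist _ h0)).1
        have : (N : ℝ) ≤ wz e (y m) := by linarith
        exact_mod_cast this)
    refine ⟨s, fun T => ?_⟩
    obtain ⟨M0, hM0⟩ := hs (⌈T⌉ + c)
    refine ⟨M0, fun M hM => ?_⟩
    by_cases h0 : s - ∑ m ∈ Finset.range M, y m = 0
    · exact Or.inl h0
    · right
      have h1 := (wz_spec e _ h0 _).2 (hM0 M hM)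
      have h1' : (⌈T⌉ : ℝ) + c ≤ wz e (s - ∑ m ∈ Finset.range M, y m) := by exact_mod_cast h1
      have h2 := (abs_le.1 (hdist _ h0)).2
      have h3 := Int.le_ceil T
      linarith


section B

variable {b : ℕ} {φV : V → V} {h : V → ℝ}

theorem IsCan.iter (hC : IsCan (k := k) b φV h) (n : ℕ) (x : V) (hx : x ≠ 0) :
    φV^[n] x ≠ 0 ∧ h (φV^[n] x) = b ^ n * h x := by
  induction n with
  | zero => simpa using hx
  | succ n ih =>
    rw [Function.iterate_succ_apply']
    refine ⟨hC.phi_ne _ ih.1, ?_⟩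
    rw [hC.phi _ ih.1, ih.2]; ring

variable [Module k V] [IsScalarTower k (LaurentSeries k) V]

theorem aux_smul_C (c : k) (x : V) : c • x = (HahnSeries.C c : LaurentSeries k) • x := by
  have h1 : (HahnSeries.C c : LaurentSeries k) = c • 1 := by
    rw [← HahnSeries.C_mul_eq_smul, mul_one]
  rw [h1, smul_assoc, one_smul]

theorem IsCan.smul_k (hC : IsCan (k := k) b φV h) (c : k) (x : V) (hc : c ≠ 0) (hx : x ≠ 0) :
    c • x ≠ 0 ∧ h (c • x) = h x := by
  have hC0 : (HahnSeries.C c : LaurentSeries k) ≠ 0 := by simpa using hc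
  have h1 : c • x = (HahnSeries.C c : LaurentSeries k) • x := by
    exact aux_smul_C c x
  rw [h1]
  refine ⟨smul_ne_zero hC0 hx, ?_⟩
  rw [hC.smul _ _ hC0 hx, HahnSeries.order_C]
  simp

/-- vectors of norm strictly bigger than `t` -/
def IsCan.gt (hC : IsCan (k := k) b φV h) (t : ℝ) : Submodule k V where
  carrier := {y | y = 0 ∨ t < h y}
  zero_mem' := Or.inl rfl
  add_mem' := by
    intro x y hx hy
    by_cases hx0 : x = 0
    · simpa [hx0] using hy
    by_cases hy0 : y = 0
    · simpa [hy0] using hx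
    by_cases hxy : x + y = 0
    · exact Or.inl hxy
    exact Or.inr (lt_of_lt_of_le (lt_min (hx.resolve_left hx0) (hy.resolve_left hy0))
      (hC.add x y hx0 hy0 hxy))
  smul_mem' := by
    intro c x hx
    by_cases hx0 : x = 0
    · left; simp [hx0]
    by_cases hc : c = 0
    · left; simp [hc]
    right
    rw [(hC.smul_k c x hc hx0).2]
    exact hx.resolve_left hx0

/-- vectors of norm at least `t` -/
def IsCan.ge (hC : IsCan (k := k) b φV h) (t : ℝ) : Submodule k V where
  carrier := {y | y = 0 ∨ t ≤ h y}
  zero_mem' := Or.inl rfl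
  add_mem' := by
    intro x y hx hy
    by_cases hx0 : x = 0
    · simpa [hx0] using hy
    by_cases hy0 : y = 0
    · simpa [hy0] using hx
    by_cases hxy : x + y = 0
    · exact Or.inl hxy
    exact Or.inr (le_trans (le_min (hx.resolve_left hx0) (hy.resolve_left hy0))
      (hC.add x y hx0 hy0 hxy))
  smul_mem' := by
    intro c x hx
    by_cases hx0 : x = 0
    · left; simp [hx0]
    by_cases hc : c = 0
    · left; simp [hc]
    right
    rw [(hC.smul_k c x hc hx0).2]
    exact hx.resolve_left hx0

theorem IsCan.mem_gt (hC : IsCan (k := k) b φV h) (t : ℝ) (x : V) :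
    x ∈ hC.gt t ↔ x = 0 ∨ t < h x := Iff.rfl

theorem IsCan.mem_ge (hC : IsCan (k := k) b φV h) (t : ℝ) (x : V) :
    x ∈ hC.ge t ↔ x = 0 ∨ t ≤ h x := Iff.rfl

theorem IsCan.li (hC : IsCan (k := k) b φV h) {ι : Type*} [Fintype ι] (x : ι → V)
    (hx : ∀ i, x i ≠ 0) (hd : ∀ i j, i ≠ j → ∀ m : ℤ, h (x i) - h (x j) ≠ m) :
    LinearIndependent (LaurentSeries k) x := by
  classical
  rw [Fintype.linearIndependent_iff]
  intro g hg
  by_contra! hcon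
  obtain ⟨i1, hi1⟩ := hcon
  obtain ⟨i0, hi0, hmin⟩ := (Finset.univ.filter fun i => g i ≠ 0).exists_min_image
    (fun i => h (g i • x i)) ⟨i1, by simpa using hi1⟩
  simp only [Finset.mem_filter, Finset.mem_univ, true_and] at hi0 hmin
  have h1 : ∑ i ∈ Finset.univ.erase i0, g i • x i ∈ hC.gt (h (g i0 • x i0)) := by
    refine Submodule.sum_mem _ fun i hi => ?_
    have hii : i ≠ i0 := (Finset.mem_erase.1 hi).1
    rw [hC.mem_gt]
    by_cases hgi : g i = 0
    · left; simp [hgi]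
    right
    refine lt_of_le_of_ne (hmin i hgi) fun heq => ?_
    rw [hC.smul _ _ hi0 (hx _), hC.smul _ _ hgi (hx _)] at heq
    apply hd i i0 hii ((g i0).order - (g i).order)
    push_cast
    linarith
  rw [← Finset.add_sum_erase _ _ (Finset.mem_univ i0)] at hg
  have h2 : g i0 • x i0 ∈ hC.gt (h (g i0 • x i0)) := by
    have h4 := Submodule.neg_mem _ h1
    rwa [← eq_neg_of_add_eq_zero_left hg] at h4
  rcases (hC.mem_gt _ _).1 h2 with h3 | h3
  · exact smul_ne_zero hi0 (hx _) h3
  · exact lt_irrefl _ h3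

theorem IsCan.exists_period [FiniteDimensional (LaurentSeries k) V] [Nontrivial V]
    (hb : 1 < b) (hC : IsCan (k := k) b φV h) :
    ∃ (z : V) (q : ℚ) (s : ℕ) (m : ℤ), z ≠ 0 ∧ 0 ≤ q ∧ 0 < s ∧ h z = q ∧
      ((b : ℚ) ^ s - 1) * q = m := by
  obtain ⟨x, hx⟩ := exists_ne (0 : V)
  obtain ⟨i, j, hij, m, hm⟩ : ∃ i j : ℕ, i < j ∧ ∃ m : ℤ, (b : ℝ) ^ j * h x - b ^ i * h x = m := by
    by_contra! hcon
    have hli := hC.li (fun i : Fin (Module.finrank (LaurentSeries k) V + 1) => φV^[(i : ℕ)] x)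
      (fun i => (hC.iter i x hx).1) (by
        intro i j hij m
        rw [(hC.iter i x hx).2, (hC.iter j x hx).2]
        rcases lt_or_gt_of_ne hij with hlt | hlt
        · intro heq
          apply hcon i j hlt (-m)
          push_cast
          linarith
        · exact hcon j i hlt m)
    have := hli.fintype_card_le_finrank
    simp at this
  have hy := hC.iter i x hx
  set y := φV^[i] x
  obtain ⟨s, rfl⟩ := Nat.exists_eq_add_of_lt hij
  have hm' : ((b : ℝ) ^ (s + 1) - 1) * h y = m := by
    rw [hy.2, ← hm]; ring
  set N : ℤ := ⌈|h y|⌉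
  have hN : |h y| ≤ N := Int.le_ceil _
  have hs1 : (HahnSeries.single N (1 : k) : LaurentSeries k) ≠ 0 := by simp
  have hb1 : (1 : ℝ) < b ^ (s + 1) := one_lt_pow₀ (by exact_mod_cast hb) (by omega)
  have hb1q : (1 : ℚ) < b ^ (s + 1) := one_lt_pow₀ (by exact_mod_cast hb) (by omega)
  have hne : (b : ℚ) ^ (s + 1) - 1 ≠ 0 := by linarith
  have hneR : (b : ℝ) ^ (s + 1) - 1 ≠ 0 := by linarith
  have hz : h ((HahnSeries.single N (1 : k) : LaurentSeries k) • y) = N + h y := by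
    rw [hC.smul _ _ hs1 hy.1, HahnSeries.order_single one_ne_zero]
  have hq : h ((HahnSeries.single N (1 : k) : LaurentSeries k) • y) =
      ((N + m / ((b : ℚ) ^ (s + 1) - 1) : ℚ) : ℝ) := by
    rw [hz]
    push_cast
    rw [← hm', mul_div_cancel_left₀ _ hneR]
  refine ⟨(HahnSeries.single N (1 : k) : LaurentSeries k) • y, N + m / ((b : ℚ) ^ (s + 1) - 1),
    s + 1, ((b : ℤ) ^ (s + 1) - 1) * N + m, smul_ne_zero hs1 hy.1, ?_, by omega, hq, ?_⟩
  · have : (0 : ℝ) ≤ ((N + m / ((b : ℚ) ^ (s + 1) - 1) : ℚ) : ℝ) := by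
      rw [← hq, hz]
      have := neg_abs_le (h y)
      linarith
    exact_mod_cast this
  · push_cast
    field_simp

end B

theorem aux_arith {b : ℕ} (hb : 1 < b) (q : ℚ) (hq : 0 ≤ q) (s : ℕ) (hs : 0 < s) (m : ℤ)
    (hm : ((b : ℚ) ^ s - 1) * q = m) :
    q.den.Coprime b ∧ 0 < orderOf (b : ZMod q.den) ∧
    (∃ n : ℕ, ((b : ℚ) ^ (orderOf (b : ZMod q.den)) - 1) * q = n) ∧
    ∀ i j, i < orderOf (b : ZMod q.den) → j < orderOf (b : ZMod q.den) → i ≠ j → ∀ m : ℤ,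
      (b : ℚ) ^ i * q - b ^ j * q ≠ m := by
  have key : ∀ a m : ℤ, (a : ℚ) * q = m → (a : ZMod q.den) = 0 := by
    intro a m h
    rw [ZMod.intCast_zmod_eq_zero_iff_dvd]
    have h1 : a * q.num = m * q.den := by
      have hd : (q.den : ℚ) ≠ 0 := by exact_mod_cast q.den_nz
      have h2 : (q.num : ℚ) = q * q.den := (Rat.mul_den_eq_num q).symm
      have : (a : ℚ) * q.num = m * q.den := by rw [h2, ← h]; ring
      exact_mod_cast this
    have hcop : IsCoprime (q.den : ℤ) q.num := by
      rw [Int.isCoprime_iff_gcd_eq_one, Int.gcd_comm]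
      simpa [Int.gcd] using q.reduced
    exact hcop.dvd_of_dvd_mul_right ⟨m, by rw [h1]; ring⟩
  have key2 : ∀ a : ℤ, (a : ZMod q.den) = 0 → ∃ m : ℤ, (a : ℚ) * q = m := by
    intro a h
    rw [ZMod.intCast_zmod_eq_zero_iff_dvd] at h
    obtain ⟨c, rfl⟩ := h
    refine ⟨c * q.num, ?_⟩
    have h2 : (q.num : ℚ) = q * q.den := (Rat.mul_den_eq_num q).symm
    push_cast
    rw [h2]; ring
  have hpow : (b : ZMod q.den) ^ s = 1 := by
    have := key ((b : ℤ) ^ s - 1) m (by push_cast; exact hm)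
    push_cast at this
    exact sub_eq_zero.1 this
  refine ⟨?_, ?_, ?_, ?_⟩
  · have : IsUnit (b : ZMod q.den) := IsUnit.of_pow_eq_one hpow hs.ne'
    exact ((ZMod.isUnit_iff_coprime _ _).1 this).symm
  · exact orderOf_pos_iff.2 (isOfFinOrder_iff_pow_eq_one.2 ⟨s, hs, hpow⟩)
  · obtain ⟨n, hn⟩ := key2 ((b : ℤ) ^ (orderOf (b : ZMod q.den)) - 1) (by
      push_cast; rw [pow_orderOf_eq_one, sub_self])
    push_cast at hn
    have h1 : (1 : ℚ) ≤ b ^ (orderOf (b : ZMod q.den)) := one_le_pow₀ (by exact_mod_cast hb.le)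
    have hn0 : 0 ≤ n := by
      have : (0 : ℚ) ≤ n := by rw [← hn]; exact mul_nonneg (by linarith) hq
      exact_mod_cast this
    lift n to ℕ using hn0
    exact ⟨n, by exact_mod_cast hn⟩
  · intro i j hi hj hij m' hm'
    apply hij
    have := key ((b : ℤ) ^ i - b ^ j) m' (by push_cast; rw [← hm']; ring)
    push_cast at this
    exact pow_injOn_Iio_orderOf hi hj (sub_eq_zero.1 this)


section C

variable {b : ℕ} {φV : V → V} {h : V → ℝ} [Module k V] [IsScalarTower k (LaurentSeries k) V]

theorem IsCan.exists_poly [FiniteDimensional (LaurentSeries k) V]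
    (hC : IsCan (k := k) b φV h) (ψ : Module.End k V) (r : ℝ)
    (hψ : ∀ x ∈ hC.ge r, ψ x ∈ hC.ge r) (z : V) (hz : z ∈ hC.ge r) :
    ∃ P : Polynomial k, P ≠ 0 ∧ Polynomial.aeval ψ P z ∈ hC.gt r := by
  classical
  have hpow : ∀ n : ℕ, (ψ ^ n) z ∈ hC.ge r := by
    intro n
    induction n with
    | zero => simpa using hz
    | succ n ih => rw [pow_succ', Module.End.mul_apply]; exact hψ _ ih
  set D := Module.finrank (LaurentSeries k) V
  have hnli : ¬ LinearIndependent (LaurentSeries k) (fun i : Fin (D + 1) => (ψ ^ (i : ℕ)) z) := by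
    intro hli
    have := hli.fintype_card_le_finrank
    simp [D] at this
  rw [Fintype.linearIndependent_iff] at hnli
  push Not at hnli
  obtain ⟨g, hg, i1, hi1⟩ := hnli
  obtain ⟨i0, hi0, hmin⟩ := (Finset.univ.filter fun i => g i ≠ 0).exists_min_image
    (fun i => (g i).order) ⟨i1, by simpa using hi1⟩
  simp only [Finset.mem_filter, Finset.mem_univ, true_and] at hi0 hmin
  set N := (g i0).order with hN
  let g' : Fin (D + 1) → LaurentSeries k := fun i => HahnSeries.single (-N) 1 * g i
  have hg' : ∀ i j, (g' i).coeff j = (g i).coeff (j + N) := by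
    intro i j
    simp only [g']
    rw [HahnSeries.coeff_single_mul]
    simp
  have hg'sum : ∑ i, g' i • (ψ ^ (i : ℕ)) z = 0 := by
    simp only [g', mul_smul, ← Finset.smul_sum, hg, smul_zero]
  have hneg : ∀ i, ∀ j < 0, (g' i).coeff j = 0 := by
    intro i j hj
    rw [hg']
    by_cases hi : g i = 0
    · simp [hi]
    · apply aux_low
      have := hmin i hi
      omega
  let c : Fin (D + 1) → k := fun i => (g' i).coeff 0
  have hc0 : c i0 ≠ 0 := by
    simp only [c, hg', zero_add]
    exact HahnSeries.coeff_order_eq_zero.not.2 hi0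
  refine ⟨∑ i : Fin (D + 1), Polynomial.monomial (i : ℕ) (c i), ?_, ?_⟩
  · intro h0
    apply hc0
    have := congrArg (fun Q => Polynomial.coeff Q (i0 : ℕ)) h0
    simp only [Polynomial.finsetSum_coeff, Polynomial.coeff_monomial, Polynomial.coeff_zero] at this
    rw [Finset.sum_eq_single i0] at this
    · simpa using this
    · intro i _ hi
      rw [if_neg]
      intro h1
      exact hi (Fin.ext h1)
    · simp
  · have h1 : Polynomial.aeval ψ (∑ i : Fin (D + 1), Polynomial.monomial (i : ℕ) (c i)) z =
        - ∑ i, (g' i - HahnSeries.C (c i)) • (ψ ^ (i : ℕ)) z := by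
      rw [eq_neg_iff_add_eq_zero, ← hg'sum, map_sum, LinearMap.sum_apply, ← Finset.sum_add_distrib]
      refine Finset.sum_congr rfl fun i _ => ?_
      rw [sub_smul, Polynomial.aeval_monomial, Module.End.mul_apply,
        Module.algebraMap_end_apply, aux_smul_C]
      abel
    rw [h1]
    refine Submodule.neg_mem _ (Submodule.sum_mem _ fun i _ => ?_)
    rw [hC.mem_gt]
    by_cases hx0 : (ψ ^ (i : ℕ)) z = 0
    · left; rw [hx0, smul_zero]
    by_cases hf0 : g' i - HahnSeries.C (c i) = 0
    · left; rw [hf0, zero_smul]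
    right
    rw [hC.smul _ _ hf0 hx0]
    have h2 := ((hC.mem_ge _ _).1 (hpow i)).resolve_left hx0
    have h3 : 0 < (g' i - HahnSeries.C (c i)).order := by
      by_contra! hle
      apply HahnSeries.coeff_order_eq_zero.not.2 hf0
      rcases lt_or_eq_of_le hle with hlt | heq
      · rw [HahnSeries.coeff_sub, hneg i _ hlt]
        have h5 : ∀ j : ℤ, j < 0 → (HahnSeries.C (c i) : LaurentSeries k).coeff j = 0 := by
          intro j hj
          rw [HahnSeries.C_apply, HahnSeries.coeff_single_of_ne hj.ne]
        rw [h5 _ hlt, sub_zero]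
      · rw [heq]
        simp [c]
    have h3' : (0 : ℝ) < (g' i - HahnSeries.C (c i)).order := by exact_mod_cast h3
    linarith

theorem IsCan.exists_eigen0 [IsAlgClosed k] (hC : IsCan (k := k) b φV h) (ψ : Module.End k V) (r : ℝ)
    (hψ : ∀ x ∈ hC.ge r, ψ x ∈ hC.ge r) (z : V) (hz : z ∈ hC.ge r) (hz' : z ∉ hC.gt r) (n : ℕ) :
    ∀ P : Polynomial k, P.natDegree = n → P ≠ 0 → Polynomial.aeval ψ P z ∈ hC.gt r →
    ∃ (a : k) (y : V), y ∈ hC.ge r ∧ y ∉ hC.gt r ∧ ψ y - a • y ∈ hC.gt r := by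
  have hpoly : ∀ Q : Polynomial k, Polynomial.aeval ψ Q z ∈ hC.ge r := by
    intro Q
    induction Q using Polynomial.induction_on' with
    | add p q hp hq => rw [map_add, LinearMap.add_apply]; exact Submodule.add_mem _ hp hq
    | monomial n c =>
      rw [Polynomial.aeval_monomial, Module.End.mul_apply, Module.algebraMap_end_apply]
      apply Submodule.smul_mem
      induction n with
      | zero => simpa using hz
      | succ n ih => rw [pow_succ', Module.End.mul_apply]; exact hψ _ ih
  induction n with
  | zero =>
    intro P hP hP0 hPz
    exfalso
    rw [Polynomial.eq_C_of_natDegree_eq_zero hP] at hPz hP0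
    rw [Polynomial.aeval_C, Module.algebraMap_end_apply] at hPz
    have hc : P.coeff 0 ≠ 0 := by simpa using hP0
    exact hz' ((Submodule.smul_mem_iff _ hc).1 hPz)
  | succ n ih =>
    intro P hP hP0 hPz
    obtain ⟨a, ha⟩ := IsAlgClosed.exists_root P (by
      rw [Polynomial.degree_eq_natDegree hP0, hP]; simp; exact_mod_cast Nat.succ_ne_zero n)
    obtain ⟨Q, rfl⟩ := Polynomial.dvd_iff_isRoot.2 ha
    have hQ0 : Q ≠ 0 := right_ne_zero_of_mul hP0
    have hQn : Q.natDegree = n := by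
      rw [Polynomial.natDegree_mul (Polynomial.X_sub_C_ne_zero a) hQ0,
        Polynomial.natDegree_X_sub_C] at hP
      omega
    by_cases hQz : Polynomial.aeval ψ Q z ∈ hC.gt r
    · exact ih Q hQn hQ0 hQz
    · refine ⟨a, Polynomial.aeval ψ Q z, hpoly Q, hQz, ?_⟩
      rw [map_mul, Module.End.mul_apply] at hPz
      simpa using hPz

theorem IsCan.exists_eigen [IsAlgClosed k] [FiniteDimensional (LaurentSeries k) V]
    (hC : IsCan (k := k) b φV h) (ψ : Module.End k V) (r : ℝ) (B : ℝ) (hB : 1 < B)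
    (hψne : ∀ x, x ≠ 0 → ψ x ≠ 0) (hψ : ∀ x, x ≠ 0 → h (ψ x) = r + B * (h x - r))
    (z0 : V) (hz0 : z0 ≠ 0) (hz0r : h z0 = r) :
    ∃ (a : k) (v : V), a ≠ 0 ∧ v ≠ 0 ∧ h v = r ∧ ψ v = a • v := by
  have hge : ∀ T, r ≤ T → ∀ x ∈ hC.ge T, ψ x ∈ hC.ge T := by
    intro T hT x hx
    rw [hC.mem_ge] at hx ⊢
    by_cases hx0 : x = 0
    · left; simp [hx0]
    right
    rw [hψ x hx0]
    have := hx.resolve_left hx0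
    nlinarith
  have hgt : ∀ x ∈ hC.gt r, ψ x ∈ hC.gt r := by
    intro x hx
    rw [hC.mem_gt] at hx ⊢
    by_cases hx0 : x = 0
    · left; simp [hx0]
    right
    rw [hψ x hx0]
    have := hx.resolve_left hx0
    nlinarith
  have hz0ge : z0 ∈ hC.ge r := Or.inr hz0r.ge
  have hz0gt : z0 ∉ hC.gt r := by
    rw [hC.mem_gt]; push Not; exact ⟨hz0, hz0r.le⟩
  obtain ⟨P, hP0, hP⟩ := hC.exists_poly ψ r (hge r le_rfl) z0 hz0ge
  obtain ⟨a, z, hzge, hzgt, haz⟩ :=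
    hC.exists_eigen0 ψ r (hge r le_rfl) z0 hz0ge hz0gt _ P rfl hP0 hP
  have hz : z ≠ 0 := by rintro rfl; exact hzgt (Submodule.zero_mem _)
  have hzr : h z = r := by
    apply le_antisymm
    · by_contra! hlt; exact hzgt (Or.inr hlt)
    · exact ((hC.mem_ge _ _).1 hzge).resolve_left hz
  have ha : a ≠ 0 := by
    rintro rfl
    rw [zero_smul, sub_zero, hC.mem_gt] at haz
    have := haz.resolve_left (hψne z hz)
    rw [hψ z hz, hzr] at this
    simp at this
  set y := a • z - ψ z with hy
  have hygt : y ∈ hC.gt r := by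
    rw [hy, ← neg_sub]; exact Submodule.neg_mem _ haz
  let Y : ℕ → V := fun m => (a⁻¹) ^ (m + 1) • (ψ ^ m) y
  have hYgt : ∀ m, Y m ∈ hC.gt r := by
    intro m
    apply Submodule.smul_mem
    induction m with
    | zero => simpa using hygt
    | succ n ih => rw [pow_succ', Module.End.mul_apply]; exact hgt _ ih
  have hYlim : ∀ T : ℝ, ∃ M0 : ℕ, ∀ m ≥ M0, Y m ∈ hC.ge T := by
    intro T
    by_cases hy0 : y = 0
    · exact ⟨0, fun m _ => Or.inl (by simp [Y, hy0])⟩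
    have hyr : r < h y := ((hC.mem_gt _ _).1 hygt).resolve_left hy0
    have hit : ∀ m : ℕ, (ψ ^ m) y ≠ 0 ∧ h ((ψ ^ m) y) = r + B ^ m * (h y - r) := by
      intro m
      induction m with
      | zero => simpa using hy0
      | succ n ih =>
        rw [pow_succ', Module.End.mul_apply]
        refine ⟨hψne _ ih.1, ?_⟩
        rw [hψ _ ih.1, ih.2]; ring
    obtain ⟨M0, hM0⟩ := pow_unbounded_of_one_lt ((T - r) / (h y - r)) hB
    refine ⟨M0, fun m hm => Or.inr ?_⟩
    simp only [Y]
    rw [(hC.smul_k _ _ (pow_ne_zero _ (inv_ne_zero ha)) (hit m).1).2, (hit m).2]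
    have h1 : B ^ M0 ≤ B ^ m := pow_le_pow_right₀ hB.le hm
    have h2 : (T - r) / (h y - r) < B ^ m := lt_of_lt_of_le hM0 h1
    rw [div_lt_iff₀ (by linarith)] at h2
    linarith
  obtain ⟨s, hs⟩ := hC.compl Y hYlim
  have hs' : ∀ T : ℝ, ∃ M0 : ℕ, ∀ M ≥ M0, s - ∑ m ∈ Finset.range M, Y m ∈ hC.ge T := hs
  have htel : ∀ M, ψ (∑ m ∈ Finset.range M, Y m) - a • (∑ m ∈ Finset.range M, Y m) =
      a • Y M - y := by
    intro M
    induction M with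
    | zero => simp [Y, smul_smul, ha]
    | succ n ih =>
      rw [Finset.sum_range_succ, map_add, smul_add]
      have h1 : ψ (Y n) = a • Y (n + 1) := by
        simp only [Y, map_smul, smul_smul]
        rw [pow_succ' ψ, Module.End.mul_apply]
        congr 1
        rw [pow_succ' _ (n + 1), mul_inv_cancel_left₀ ha]
      rw [h1]
      have : ∀ p q t w : V, p + q - (t + w) = (p - t) + (q - w) := by intros; abel
      rw [this, ih]; abel
  have hzero : ψ s - a • s + y = 0 := by
    by_contra hne
    have hall : ∀ T, r ≤ T → ψ s - a • s + y ∈ hC.ge T := by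
      intro T hT
      obtain ⟨M1, hM1⟩ := hYlim T
      obtain ⟨M2, hM2⟩ := hs' T
      have h1 := hM1 (max M1 M2) (le_max_left _ _)
      have h2 := hM2 (max M1 M2) (le_max_right _ _)
      have h3 := htel (max M1 M2)
      set S := ∑ m ∈ Finset.range (max M1 M2), Y m
      have h4 : ψ s - a • s + y = (ψ (s - S) - a • (s - S)) + a • Y (max M1 M2) := by
        rw [map_sub, smul_sub]
        have : a • Y (max M1 M2) = ψ S - a • S + y := by rw [h3]; abel
        rw [this]; abel
      rw [h4]
      exact Submodule.add_mem _ (Submodule.sub_mem _ (hge T hT _ h2) (Submodule.smul_mem _ _ h2))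
        (Submodule.smul_mem _ _ h1)
    have h5 := hall (max r (h (ψ s - a • s + y) + 1)) (le_max_left _ _)
    have h6 := ((hC.mem_ge _ _).1 h5).resolve_left hne
    have h7 := (le_max_right _ _).trans h6
    linarith
  have hsgt : s ∈ hC.gt r := by
    obtain ⟨M2, hM2⟩ := hs' (r + 1)
    have h2 := hM2 M2 le_rfl
    have h3 : s - ∑ m ∈ Finset.range M2, Y m ∈ hC.gt r := by
      rcases h2 with h2 | h2
      · exact Or.inl h2
      · exact Or.inr (by linarith)
    have h4 := Submodule.add_mem _ h3 (Submodule.sum_mem _ fun m (_ : m ∈ Finset.range M2) => hYgt m)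
    rwa [sub_add_cancel] at h4
  have hvgt : z - s ∉ hC.gt r := by
    intro hmem
    apply hzgt
    have := Submodule.add_mem _ hmem hsgt
    rwa [sub_add_cancel] at this
  have hv0 : z - s ≠ 0 := by intro h0; rw [h0] at hvgt; exact hvgt (Submodule.zero_mem _)
  have hsge : s ∈ hC.ge r := by
    rcases hsgt with h2 | h2
    · exact Or.inl h2
    · exact Or.inr h2.le
  refine ⟨a, z - s, ha, hv0, ?_, ?_⟩
  · apply le_antisymm
    · by_contra! hlt; exact hvgt (Or.inr hlt)
    · exact ((hC.mem_ge _ _).1 (Submodule.sub_mem _ hzge hsge)).resolve_left hv0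
  · rw [← sub_eq_zero, map_sub, smul_sub]
    have : ψ z - ψ s - (a • z - a • s) = - (ψ s - a • s + y) := by rw [hy]; abel
    rw [this, hzero, neg_zero]

end C

theorem aux_equiv (φ : LaurentSeries k →+* LaurentSeries k) (φV : V → V)
    (hadd : ∀ x y, φV (x + y) = φV x + φV y)
    (hsemi : ∀ (c : LaurentSeries k) (x : V), φV (c • x) = φ c • φV x)
    (hsimple : ∀ W : Submodule (LaurentSeries k) V, (∀ x ∈ W, φV x ∈ W) → W = ⊥ ∨ W = ⊤)
    (δ n : ℕ) (hδ : 0 < δ) (a : k) (v : V) (hv : v ≠ 0)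
    (hli : LinearIndependent (LaurentSeries k) fun i : Fin δ => φV^[(i : ℕ)] v)
    (hper : φV^[δ] v = (HahnSeries.single (n : ℤ) a : LaurentSeries k) • v) :
    ∃ e : V ≃ₗ[LaurentSeries k] (Fin δ → LaurentSeries k), ∀ x, e (φV x) = Dphi φ δ n a (e x) := by
  let F : V →+ V := AddMonoidHom.mk' φV hadd
  have hF : ∀ x, F x = φV x := fun _ => rfl
  set W := Submodule.span (LaurentSeries k) (Set.range fun i : Fin δ => φV^[(i : ℕ)] v) with hW
  have hmem : ∀ i, i < δ → φV^[i] v ∈ W := fun i hi => Submodule.subset_span ⟨⟨i, hi⟩, rfl⟩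
  have hstab : ∀ x ∈ W, φV x ∈ W := by
    intro x hx
    induction hx using Submodule.span_induction with
    | mem x hx =>
      obtain ⟨i, rfl⟩ := hx
      simp only
      rw [← Function.iterate_succ_apply' φV]
      by_cases hi : (i : ℕ) + 1 < δ
      · exact hmem _ hi
      · have : (i : ℕ) + 1 = δ := by have := i.isLt; omega
        rw [Nat.succ_eq_add_one, this, hper]
        exact Submodule.smul_mem _ _ (hmem 0 hδ)
    | zero => rw [← hF, map_zero]; exact Submodule.zero_mem _
    | add x y _ _ hx hy => rw [hadd]; exact Submodule.add_mem _ hx hy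
    | smul c x _ hx => rw [hsemi]; exact Submodule.smul_mem _ _ hx
  have htop : W = ⊤ := by
    refine (hsimple W hstab).resolve_left fun h0 => hv ?_
    have := hmem 0 hδ
    rw [h0] at this
    simpa using this
  let B := Module.Basis.mk hli htop.ge
  have hB : ∀ i, B i = φV^[(i : ℕ)] v := fun i => by simp [B]
  refine ⟨B.equivFun, fun x => ?_⟩
  obtain ⟨c, rfl⟩ := B.equivFun.symm.surjective x
  rw [LinearEquiv.apply_symm_apply]
  apply B.equivFun.symm.injective
  rw [LinearEquiv.symm_apply_apply, B.equivFun_symm_apply, B.equivFun_symm_apply, ← hF, map_sum]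
  simp only [hF, hsemi, hB, ← Function.iterate_succ_apply' φV]
  clear_value B
  obtain ⟨d, rfl⟩ : ∃ d, δ = d + 1 := ⟨δ - 1, by omega⟩
  rw [Fin.sum_univ_castSucc, Fin.sum_univ_succ, add_comm]
  congr 1
  · simp only [Fin.val_last, Nat.succ_eq_add_one, hper, Dphi]
    simp [smul_smul, mul_comm, Fin.last]

end Aux

theorem main_aux {k : Type*} [Field k] [IsAlgClosed k] (b : ℕ) (hb : 1 < b)
    (φ : LaurentSeries k →+* LaurentSeries k)
    (hφ1 : ∀ (f : LaurentSeries k) (m : ℤ), (φ f).coeff ((b : ℤ) * m) = f.coeff m)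
    (hφ2 : ∀ (f : LaurentSeries k) (m : ℤ), ¬ ((b : ℤ) ∣ m) → (φ f).coeff m = 0)
    (V : Type*) [AddCommGroup V] [Module (LaurentSeries k) V]
    [FiniteDimensional (LaurentSeries k) V] [Nontrivial V] (φV : V → V)
    (hadd : ∀ x y, φV (x + y) = φV x + φV y)
    (hsemi : ∀ (c : LaurentSeries k) (x : V), φV (c • x) = φ c • φV x)
    (hetale : Submodule.span (LaurentSeries k) (Set.range φV) = ⊤)
    (hsimple : ∀ W : Submodule (LaurentSeries k) V, (∀ x ∈ W, φV x ∈ W) → W = ⊥ ∨ W = ⊤) :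
    ∃ (r : ℚ) (n : ℕ) (a : k), r.den.Coprime b ∧ a ≠ 0 ∧
      (∃ m : ℤ, (n : ℚ) / ((b : ℚ) ^ (orderOf (b : ZMod r.den)) - 1) - r = (m : ℚ)) ∧
      ∃ e : V ≃ₗ[LaurentSeries k] (Fin (orderOf (b : ZMod r.den)) → LaurentSeries k),
        ∀ x, e (φV x) = Dphi φ (orderOf (b : ZMod r.den)) n a (e x) := by
  letI : Module k V := Module.compHom V (HahnSeries.C : k →+* LaurentSeries k)
  have hsm : ∀ (c : k) (x : V), c • x = (HahnSeries.C c : LaurentSeries k) • x := fun _ _ => rfl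
  haveI : IsScalarTower k (LaurentSeries k) V := ⟨fun c f x => by
    rw [hsm, ← HahnSeries.C_mul_eq_smul, mul_smul]⟩
  obtain ⟨h, hC⟩ := exists_isCan hb φ hφ1 hφ2 φV hadd hsemi hetale
  obtain ⟨z, q, s, m, hz, hq, hs, hzq, hm⟩ := hC.exists_period hb
  obtain ⟨hcop, hδ, ⟨n, hn⟩, hdist⟩ := aux_arith hb q hq s hs m hm
  refine ⟨q, n, ?_⟩
  generalize orderOf (b : ZMod q.den) = δ at hδ hn hdist
  have hB : (1 : ℝ) < (b : ℝ) ^ δ := one_lt_pow₀ (by exact_mod_cast hb) hδ.ne'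
  have hBq : (1 : ℚ) < (b : ℚ) ^ δ := one_lt_pow₀ (by exact_mod_cast hb) hδ.ne'
  have hIadd : ∀ n x y, φV^[n] (x + y) = φV^[n] x + φV^[n] y := by
    intro n
    induction n with
    | zero => intro x y; rfl
    | succ n ih => intro x y; simp only [Function.iterate_succ_apply', ih, hadd]
  have hIk : ∀ n (c : k) x, φV^[n] (c • x) = c • φV^[n] x := by
    intro n
    induction n with
    | zero => intro c x; rfl
    | succ n ih =>
      intro c x
      simp only [Function.iterate_succ_apply', ih]
      rw [hsm, hsemi, aux_phi_C hb φ hφ1 hφ2, ← hsm]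
  let U : LaurentSeries k := HahnSeries.single (-(n : ℤ)) 1
  have hU : U ≠ 0 := by simp [U]
  have hUo : U.order = -(n : ℤ) := HahnSeries.order_single one_ne_zero
  let ψ : Module.End k V :=
    { toFun := fun x => U • φV^[δ] x
      map_add' := fun x y => by rw [hIadd, smul_add]
      map_smul' := fun c x => by
        simp only [RingHom.id_apply]
        rw [hIk, hsm, hsm, smul_smul, smul_smul, mul_comm] }
  have hψ : ∀ x, ψ x = U • φV^[δ] x := fun _ => rfl
  have hnR : ((b : ℝ) ^ δ - 1) * (q : ℝ) = n := by exact_mod_cast hn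
  obtain ⟨a, v, ha, hv, hvq, hav⟩ := hC.exists_eigen ψ q ((b : ℝ) ^ δ) hB
    (fun x hx => smul_ne_zero hU (hC.iter δ x hx).1)
    (fun x hx => by
      rw [hψ, hC.smul _ _ hU (hC.iter δ x hx).1, (hC.iter δ x hx).2, hUo]
      push_cast
      rw [← hnR]; ring) z hz hzq
  refine ⟨a, hcop, ha, ⟨0, ?_⟩, ?_⟩
  · have : (b : ℚ) ^ δ - 1 ≠ 0 := by linarith
    rw [← hn, mul_div_cancel_left₀ _ this]
    simp
  · refine aux_equiv φ φV hadd hsemi hsimple δ n hδ a v hv ?_ ?_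
    · refine hC.li _ (fun i => (hC.iter i v hv).1) fun i j hij m' hm' => ?_
      rw [(hC.iter i v hv).2, (hC.iter j v hv).2, hvq] at hm'
      exact hdist i j i.isLt j.isLt (fun h => hij (Fin.ext h)) m' (by exact_mod_cast hm')
    · rw [hψ, hsm] at hav
      have h1 : (HahnSeries.single (n : ℤ) (1 : k) : LaurentSeries k) * U = 1 := by
        simp [U, HahnSeries.single_mul_single]
      have h2 : (HahnSeries.single (n : ℤ) a : LaurentSeries k) =
          HahnSeries.single (n : ℤ) (1 : k) * HahnSeries.C a := by
        simp [HahnSeries.C_apply, HahnSeries.single_mul_single]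
      rw [h2, mul_smul, ← hav, smul_smul, h1, one_smul]

/-- Classification theorem, case `σ = id`: every simple étale φ-module over
`K = k((u))`, `k = F̄_p`, with `φ(Σ aₘ uᵐ) = Σ aₘ u^{bm}`, is isomorphic to
`D(r, a) = D(ℓ(r), n, a)` for some `r ∈ R_b` and `a ∈ k*`. -/
theorem stmt18 (p : ℕ) [Fact p.Prime] (b : ℕ) (hb : 1 < b)
    (φ : LaurentSeries (AlgebraicClosure (ZMod p)) →+*
      LaurentSeries (AlgebraicClosure (ZMod p)))
    (hφ1 : ∀ (f : LaurentSeries (AlgebraicClosure (ZMod p))) (m : ℤ),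
      (φ f).coeff ((b : ℤ) * m) = f.coeff m)
    (hφ2 : ∀ (f : LaurentSeries (AlgebraicClosure (ZMod p))) (m : ℤ),
      ¬ ((b : ℤ) ∣ m) → (φ f).coeff m = 0)
    (V : Type*) [AddCommGroup V]
    [Module (LaurentSeries (AlgebraicClosure (ZMod p))) V]
    [FiniteDimensional (LaurentSeries (AlgebraicClosure (ZMod p))) V]
    [Nontrivial V]
    (φV : V → V)
    (hadd : ∀ x y, φV (x + y) = φV x + φV y)
    (hsemi : ∀ (c : LaurentSeries (AlgebraicClosure (ZMod p))) (x : V),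
      φV (c • x) = φ c • φV x)
    (hetale : Submodule.span (LaurentSeries (AlgebraicClosure (ZMod p)))
      (Set.range φV) = ⊤)
    (hsimple : ∀ W : Submodule (LaurentSeries (AlgebraicClosure (ZMod p))) V,
      (∀ x ∈ W, φV x ∈ W) → W = ⊥ ∨ W = ⊤) :
    ∃ (r : ℚ) (n : ℕ) (a : AlgebraicClosure (ZMod p)), r.den.Coprime b ∧ a ≠ 0 ∧
      (∃ m : ℤ,
        (n : ℚ) / ((b : ℚ) ^ (orderOf (b : ZMod r.den)) - 1) - r = (m : ℚ)) ∧
      ∃ e : V ≃ₗ[LaurentSeries (AlgebraicClosure (ZMod p))]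
          (Fin (orderOf (b : ZMod r.den)) →
            LaurentSeries (AlgebraicClosure (ZMod p))),
        ∀ x, e (φV x) = Dphi φ (orderOf (b : ZMod r.den)) n a (e x) := by
  exact main_aux b hb φ hφ1 hφ2 V φV hadd hsemi hetale hsimple
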